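/- Let X, Y be Banach spaces and f : X → Y Fréchet differentiable such that f'(x) is invertible for every x and x ↦ (f'(x))⁻¹ ∈ L(Y,X) is locally Lipschitz. If ‖(f'(x))⁻¹‖ ≤ c(‖x‖ + 1) for all x ∈ X and some constant c, then f is surjective; moreover f has a continuous right inverse ψ : Y → X with f ∘ ψ = id_Y. -/

import Mathlib

/-!
The idea is Hadamard's. By the inverse function theorem `f` is a local homeomorphism, so a lift of
the segment from `f 0` to `y` through `f` can be continued as long as it converges. Such a lift `γ`
has velocity `(f' (γ t))⁻¹ (y - f 0)`, whose norm is at most affine in `‖γ t‖`; by Grönwall's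
inequality the velocity is bounded, so `γ` is Lipschitz and converges. Hence every segment issuing
from `f 0` lifts to a path issuing from `0`, and the endpoint of the lift depends continuously on
`y`. This right inverse is also a left inverse: composed with `f` it is a lift of `f` through `f`
that agrees with the identity at `0`, and lifts to the connected space `X` are unique.
-/

open Set Filter Topology

section PathLifting

/-- `γ` lifts the path `p` through `f` on the set of times `s`, starting from `x₀` at time `a`. The
starting condition does not require `a ∈ s`. -/
structure IsLiftOn {X Y ι : Type*} [TopologicalSpace X] [TopologicalSpace ι]
    (f : X → Y) (p : ι → Y) (a : ι) (x₀ : X) (s : Set ι) (γ : ι → X) : Prop where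
  continuousOn : ContinuousOn γ s
  start : γ a = x₀
  comp_eqOn : EqOn (f ∘ γ) p s

namespace IsLiftOn

variable {X Y ι : Type*} [TopologicalSpace X] [TopologicalSpace ι] {f : X → Y} {p : ι → Y} {x₀ : X}
  {a b c : ι} {γ δ : ι → X}

theorem mono {s s' : Set ι} (hγ : IsLiftOn f p a x₀ s γ) (hs : s' ⊆ s) :
    IsLiftOn f p a x₀ s' γ :=
  ⟨hγ.continuousOn.mono hs, hγ.start, hγ.comp_eqOn.mono hs⟩

theorem eqOn {s : Set ι} (hf : IsSeparatedMap f) (hf' : IsLocallyInjective f)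
    (hs : IsPreconnected s) (ha : a ∈ s) (hγ : IsLiftOn f p a x₀ s γ)
    (hδ : IsLiftOn f p a x₀ s δ) : EqOn γ δ s :=
  hf.eqOn_of_comp_eqOn hf' hs hγ.continuousOn hδ.continuousOn
    (hγ.comp_eqOn.trans hδ.comp_eqOn.symm) ha (hγ.start.trans hδ.start.symm)

variable [LinearOrder ι] [OrderTopology ι]

theorem trans (hab : a ≤ b) (hbc : b ≤ c) (hγ : IsLiftOn f p a x₀ (Icc a b) γ)
    (hδ : IsLiftOn f p b (γ b) (Icc b c) δ) :
    IsLiftOn f p a x₀ (Icc a c) (fun t => if t ≤ b then γ t else δ t) := by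
  have eqγ : EqOn (fun t => if t ≤ b then γ t else δ t) γ (Icc a b) := fun t ht => if_pos ht.2
  have eqδ : EqOn (fun t => if t ≤ b then γ t else δ t) δ (Icc b c) := by
    intro t ht
    rcases ht.1.eq_or_lt with rfl | hlt
    · simp only [le_refl, if_true, hδ.start]
    · exact if_neg hlt.not_ge
  refine ⟨?_, (eqγ (left_mem_Icc.2 hab)).trans hγ.start, ?_⟩ <;> rw [← Icc_union_Icc_eq_Icc hab hbc]
  · exact (hγ.continuousOn.congr eqγ).union_of_isClosed (hδ.continuousOn.congr eqδ)
      isClosed_Icc isClosed_Icc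
  · exact ((eqγ.comp_left (g := f)).trans hγ.comp_eqOn).union
      ((eqδ.comp_left (g := f)).trans hδ.comp_eqOn)

theorem update_of_tendsto [DenselyOrdered ι] [TopologicalSpace Y] [T2Space Y] (hab : a < b)
    (hf : Continuous f) (hp : ContinuousOn p (Icc a b)) (hγ : IsLiftOn f p a x₀ (Ico a b) γ)
    {x : X} (hx : Tendsto γ (𝓝[<] b) (𝓝 x)) :
    IsLiftOn f p a x₀ (Icc a b) (Function.update γ b x) := by
  have hfx : f x = p b := by
    have : (𝓝[<] b).NeBot := nhdsLT_neBot_of_exists_lt ⟨a, hab⟩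
    have hpb : Tendsto p (𝓝[<] b) (𝓝 (p b)) := by
      rw [← nhdsWithin_Ico_eq_nhdsLT hab]
      exact (hp b (right_mem_Icc.2 hab.le)).mono Ico_subset_Icc_self
    refine tendsto_nhds_unique ((hf.tendsto x).comp hx) (hpb.congr' ?_)
    filter_upwards [Ico_mem_nhdsLT hab] with t ht using (hγ.comp_eqOn ht).symm
  refine ⟨?_, by rw [Function.update_of_ne hab.ne, hγ.start], fun t ht => ?_⟩
  · rw [continuousOn_update_iff, Icc_sdiff_right, nhdsWithin_Ico_eq_nhdsLT hab]
    exact ⟨hγ.continuousOn, fun _ => hx⟩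
  · rcases ht.2.eq_or_lt with rfl | hlt
    · rw [Function.comp_apply, Function.update_self, hfx]
    · rw [Function.comp_apply, Function.update_of_ne hlt.ne]
      exact hγ.comp_eqOn ⟨ht.1, hlt⟩

end IsLiftOn

variable {X Y ι : Type*} [TopologicalSpace X] [TopologicalSpace ι] {f : X → Y} {p : ι → Y} {x₀ : X}
  {a b : ι}

theorem exists_isLiftOn_Icc_of_lt [LinearOrder ι] [DenselyOrdered ι] [OrderTopology ι]
    [TopologicalSpace Y] (hf : IsLocalHomeomorph f) (hab : a < b) (hp : ContinuousOn p (Icc a b))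
    (hx₀ : f x₀ = p a) :
    ∃ c ∈ Ioc a b, ∃ γ, IsLiftOn f p a x₀ (Icc a c) γ := by
  obtain ⟨e, hxe, rfl⟩ := hf x₀
  have htarget : p ⁻¹' e.target ∈ 𝓝[≥] a := by
    rw [← nhdsWithin_Icc_eq_nhdsGE hab]
    exact hp a (left_mem_Icc.2 hab.le) (e.open_target.mem_nhds (hx₀ ▸ e.map_source hxe))
  obtain ⟨d, hd, hde⟩ := (mem_nhdsGE_iff_exists_mem_Ioc_Ico_subset hab).1 htarget
  obtain ⟨c, hac, hcd⟩ := exists_between hd.1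
  have hce : MapsTo p (Icc a c) e.target := fun t ht => hde ⟨ht.1, ht.2.trans_lt hcd⟩
  have hcb : c ≤ b := hcd.le.trans hd.2
  refine ⟨c, ⟨hac, hcb⟩, e.symm ∘ p, ?_, ?_, fun t ht => e.right_inv (hce ht)⟩
  · exact e.continuousOn_symm.comp (hp.mono (Icc_subset_Icc_right hcb)) hce
  · rw [Function.comp_apply, ← hx₀, e.left_inv hxe]

variable [ConditionallyCompleteLinearOrder ι] [DenselyOrdered ι] [OrderTopology ι]

theorem exists_isLiftOn_Ico_of_forall_Icc (hf : IsSeparatedMap f) (hf' : IsLocallyInjective f)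
    (hab : a < b) (h : ∀ t ∈ Ico a b, ∃ γ, IsLiftOn f p a x₀ (Icc a t) γ) :
    ∃ γ, IsLiftOn f p a x₀ (Ico a b) γ := by
  have : Nonempty X := ⟨x₀⟩
  choose! Γ hΓ using h
  have diagonal_eqOn : ∀ s ∈ Ico a b, EqOn (fun t => Γ t t) (Γ s) (Icc a s) := by
    intro s hs t ht
    exact (hΓ t ⟨ht.1, ht.2.trans_lt hs.2⟩).eqOn hf hf' isPreconnected_Icc (left_mem_Icc.2 ht.1)
      ((hΓ s hs).mono (Icc_subset_Icc_right ht.2)) (right_mem_Icc.2 ht.1)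
  refine ⟨fun t => Γ t t, continuousOn_of_locally_continuousOn fun t ht => ?_,
    (hΓ a (left_mem_Ico.2 hab)).start, fun t ht => (hΓ t ht).comp_eqOn (right_mem_Icc.2 ht.1)⟩
  obtain ⟨s, hts, hsb⟩ := exists_between ht.2
  have hs : s ∈ Ico a b := ⟨ht.1.trans hts.le, hsb⟩
  exact ⟨Iio s, isOpen_Iio, hts, ((hΓ s hs).continuousOn.congr (diagonal_eqOn s hs)).mono
    fun u hu => ⟨hu.1.1, hu.2.le⟩⟩

theorem exists_isLiftOn_Icc_of_forall_tendsto [TopologicalSpace Y] [T2Space Y]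
    (hf : IsLocalHomeomorph f) (hf' : IsSeparatedMap f) (hab : a ≤ b)
    (hp : ContinuousOn p (Icc a b)) (hx₀ : f x₀ = p a)
    (hlim : ∀ c ∈ Ioc a b, ∀ γ, IsLiftOn f p a x₀ (Ico a c) γ →
      ∃ x, Tendsto γ (𝓝[<] c) (𝓝 x)) :
    ∃ γ, IsLiftOn f p a x₀ (Icc a b) γ := by
  let S : Set ι := {t ∈ Icc a b | ∃ γ, IsLiftOn f p a x₀ (Icc a t) γ}
  have haS : a ∈ S := by
    refine ⟨left_mem_Icc.2 hab, fun _ => x₀, continuousOn_const, rfl, ?_⟩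
    rw [Icc_self, eqOn_singleton]
    exact hx₀
  have hbdd : BddAbove S := ⟨b, fun t ht => ht.1.2⟩
  set c := sSup S
  have hac : a ≤ c := le_csSup hbdd haS
  have hcb : c ≤ b := csSup_le ⟨a, haS⟩ fun t ht => ht.1.2
  have hcS : c ∈ S := by
    rcases hac.eq_or_lt with hac | hac
    · exact hac ▸ haS
    have hlt : ∀ t ∈ Ico a c, ∃ γ, IsLiftOn f p a x₀ (Icc a t) γ := by
      intro t ht
      obtain ⟨u, ⟨-, γ, hγ⟩, htu⟩ := exists_lt_of_lt_csSup ⟨a, haS⟩ ht.2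
      exact ⟨γ, hγ.mono (Icc_subset_Icc_right htu.le)⟩
    obtain ⟨γ, hγ⟩ := exists_isLiftOn_Ico_of_forall_Icc hf' hf.isLocallyInjective hac hlt
    obtain ⟨x, hx⟩ := hlim c ⟨hac, hcb⟩ γ hγ
    exact ⟨⟨hac.le, hcb⟩, _,
      hγ.update_of_tendsto hac hf.continuous (hp.mono (Icc_subset_Icc_right hcb)) hx⟩
  obtain ⟨-, γ, hγ⟩ := hcS
  rcases hcb.eq_or_lt with hcb | hcb
  · exact ⟨γ, hcb ▸ hγ⟩
  obtain ⟨d, hd, δ, hδ⟩ := exists_isLiftOn_Icc_of_lt hf hcb (hp.mono (Icc_subset_Icc_left hac))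
    (hγ.comp_eqOn (right_mem_Icc.2 hac))
  have hdS : d ∈ S := ⟨⟨hac.trans hd.1.le, hd.2⟩, _, hγ.trans hac hd.1.le hδ⟩
  exact absurd (le_csSup hbdd hdS) hd.1.not_ge

end PathLifting

theorem isHomeomorph_of_forall_exists_isLiftOn_lineMap {X Y : Type*} [TopologicalSpace X]
    [PreconnectedSpace X] [AddCommGroup Y] [Module ℝ Y] [TopologicalSpace Y]
    [IsTopologicalAddGroup Y] [ContinuousSMul ℝ Y] {f : X → Y} (hf : IsLocalHomeomorph f)
    (hf' : IsSeparatedMap f) (x₀ : X)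
    (h : ∀ y, ∃ γ, IsLiftOn f (AffineMap.lineMap (f x₀) y : ℝ → Y) 0 x₀ (Icc 0 1) γ) :
    IsHomeomorph f := by
  choose Γ hΓ using h
  have hΓ_cont : Continuous fun q : unitInterval × Y => Γ q.2 q.1 := by
    refine hf.continuous_lift hf'
      ⟨fun q : unitInterval × Y => AffineMap.lineMap (f x₀) q.2 (q.1 : ℝ), by fun_prop⟩
      (funext fun q => (hΓ q.2).comp_eqOn q.1.2) ?_ fun y => ?_
    · exact continuous_const.congr fun y => (hΓ y).start.symm
    · exact (hΓ y).continuousOn.comp_continuous continuous_subtype_val Subtype.prop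
  have hψ_cont : Continuous fun y => Γ y 1 := hΓ_cont.comp (.prodMk_right (1 : unitInterval))
  have hψ_right : Function.RightInverse (fun y => Γ y 1) f := fun y => by
    simpa using (hΓ y).comp_eqOn (right_mem_Icc.2 zero_le_one)
  have hψ_base : Γ (f x₀) 1 = x₀ := by
    have hconst : IsLiftOn f (AffineMap.lineMap (f x₀) (f x₀) : ℝ → Y) 0 x₀ (Icc 0 1)
        fun _ => x₀ := ⟨continuousOn_const, rfl, fun t _ => by simp⟩
    exact (hΓ (f x₀)).eqOn hf' hf.isLocallyInjective isPreconnected_Icc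
      (left_mem_Icc.2 zero_le_one) hconst (right_mem_Icc.2 zero_le_one)
  have hψ_left : (fun y => Γ y 1) ∘ f = id :=
    hf'.eq_of_comp_eq hf.isLocallyInjective (hψ_cont.comp hf.continuous) continuous_id
      (funext fun x => hψ_right (f x)) x₀ hψ_base
  exact isHomeomorph_iff_exists_inverse.2
    ⟨hf.continuous, _, congrFun hψ_left, hψ_right, hψ_cont⟩

section Growth

variable {E : Type*} [NormedAddCommGroup E] [NormedSpace ℝ E] {γ γ' : ℝ → E} {a b K ε : ℝ}

theorem norm_le_gronwallBound_of_norm_deriv_le_Ico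
    (hγ : ∀ t ∈ Ico a b, HasDerivWithinAt γ (γ' t) (Ico a b) t)
    (hbound : ∀ t ∈ Ico a b, ‖γ' t‖ ≤ K * ‖γ t‖ + ε) :
    ∀ t ∈ Ico a b, ‖γ t‖ ≤ gronwallBound ‖γ a‖ K ε (t - a) := by
  intro t ht
  have hsub : Icc a t ⊆ Ico a b := Icc_subset_Ico_right ht.2
  refine norm_le_gronwallBound_of_norm_deriv_right_le
    (fun u hu => ((hγ u (hsub hu)).mono hsub).continuousWithinAt) (fun u hu => ?_) le_rfl
    (fun u hu => hbound u (hsub (Ico_subset_Icc_self hu))) t (right_mem_Icc.2 ht.1)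
  have hu' : u ∈ Ico a b := hsub (Ico_subset_Icc_self hu)
  exact (hγ u hu').mono_of_mem_nhdsWithin
    (mem_of_superset (Ico_mem_nhdsGE hu'.2) (Ico_subset_Ico_left hu'.1))

theorem exists_tendsto_nhdsLT_of_norm_deriv_le [CompleteSpace E] (hab : a < b)
    (hγ : ∀ t ∈ Ico a b, HasDerivWithinAt γ (γ' t) (Ico a b) t)
    (hbound : ∀ t ∈ Ico a b, ‖γ' t‖ ≤ K * ‖γ t‖ + ε) :
    ∃ x, Tendsto γ (𝓝[<] b) (𝓝 x) := by
  obtain ⟨M, hM⟩ : ∃ M, ∀ t ∈ Ico a b, ‖γ t‖ ≤ M := by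
    have hcont : Continuous fun t => gronwallBound ‖γ a‖ K ε (t - a) :=
      continuous_iff_continuousAt.2 fun t => (hasDerivAt_gronwallBound_shift _ _ _ t a).continuousAt
    obtain ⟨M, hM⟩ := isCompact_Icc.bddAbove_image (hcont.continuousOn (s := Icc a b))
    exact ⟨M, fun t ht => (norm_le_gronwallBound_of_norm_deriv_le_Ico hγ hbound t ht).trans
      (hM (mem_image_of_mem _ (Ico_subset_Icc_self ht)))⟩
  have hspeed : ∀ t ∈ Ico a b, ‖γ' t‖ ≤ |K| * M + ε := fun t ht =>
    calc ‖γ' t‖ ≤ K * ‖γ t‖ + ε := hbound t ht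
      _ ≤ |K| * M + ε := by gcongr; exacts [le_abs_self K, hM t ht]
  have hlip : LipschitzOnWith (|K| * M + ε).toNNReal γ (Ico a b) :=
    (convex_Ico a b).lipschitzOnWith_of_nnnorm_hasDerivWithin_le hγ fun t ht =>
      NNReal.le_toNNReal_of_coe_le (hspeed t ht)
  have : (𝓝[<] b).NeBot := nhdsLT_neBot_of_exists_lt ⟨a, hab⟩
  exact cauchy_map_iff_exists_tendsto.1 <| (cauchy_nhds.mono nhdsWithin_le_nhds).map_of_le
    hlip.uniformContinuousOn (le_principal_iff.2 (Ico_mem_nhdsLT hab))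

end Growth

section Calculus

variable {𝕜 E F : Type*} [NontriviallyNormedField 𝕜] [NormedAddCommGroup E] [NormedSpace 𝕜 E]
  [NormedAddCommGroup F] [NormedSpace 𝕜 F]

theorem isLocalHomeomorph_of_hasStrictFDerivAt_equiv [CompleteSpace E] {f : E → F}
    {f' : E → E ≃L[𝕜] F} (hf : ∀ x, HasStrictFDerivAt f (f' x : E →L[𝕜] F) x) :
    IsLocalHomeomorph f := fun x =>
  ⟨(hf x).toOpenPartialHomeomorph f, (hf x).mem_toOpenPartialHomeomorph_source, rfl⟩

theorem continuous_coe_symm_of_continuous_coe [CompleteSpace E] {T : Type*} [TopologicalSpace T]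
    {e : T → E ≃L[𝕜] F} (he : Continuous fun t => (e t : E →L[𝕜] F)) :
    Continuous fun t => ((e t).symm : F →L[𝕜] E) := by
  simp only [← ContinuousLinearMap.inverse_equiv]
  exact continuous_iff_continuousAt.2 fun t =>
    (contDiffAt_map_inverse (n := 0) (e t)).continuousAt.comp (f := fun t => (e t : E →L[𝕜] F))
      he.continuousAt

theorem IsLiftOn.hasDerivWithinAt {f : E → F} {p : 𝕜 → F} {γ : 𝕜 → E} {a t : 𝕜} {x₀ : E}
    {s : Set 𝕜} (hγ : IsLiftOn f p a x₀ s γ) (ht : t ∈ s) {f' : E →L[𝕜] F} {g' : F →L[𝕜] E}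
    (hf : HasFDerivAt f f' (γ t)) (hg' : Function.LeftInverse g' f') {v : F}
    (hp : HasDerivWithinAt p v s t) : HasDerivWithinAt γ (g' v) s t := by
  have hγt : Tendsto γ (𝓝[s] t) (𝓝[univ] (γ t)) := by
    rw [nhdsWithin_univ]
    exact hγ.continuousOn t ht
  simpa using (hf.hasFDerivWithinAt.of_comp_of_leftInverse hγt hp.hasFDerivWithinAt
    hγ.comp_eqOn.eventuallyEq_nhdsWithin hg' ht).hasDerivWithinAt

end Calculus

theorem global_inverse_linear_growth_general {X Y : Type*} [NormedAddCommGroup X] [NormedSpace ℝ X]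
    [CompleteSpace X] [NormedAddCommGroup Y] [NormedSpace ℝ Y] {f : X → Y} {f' : X → X ≃L[ℝ] Y}
    (hf : ∀ x, HasFDerivAt f (f' x : X →L[ℝ] Y) x)
    (hcont : Continuous fun x => ((f' x).symm : Y →L[ℝ] X)) {c : ℝ}
    (hgrowth : ∀ x, ‖((f' x).symm : Y →L[ℝ] X)‖ ≤ c * (‖x‖ + 1)) : IsHomeomorph f := by
  have : CompleteSpace Y :=
    (completeSpace_congr (e := (f' 0).toEquiv) (f' 0).isUniformEmbedding).1 ‹_›
  have hf'_cont : Continuous fun x => (f' x : X →L[ℝ] Y) :=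
    continuous_coe_symm_of_continuous_coe (e := fun x => (f' x).symm) hcont
  have hlocal : IsLocalHomeomorph f := isLocalHomeomorph_of_hasStrictFDerivAt_equiv fun x =>
    hasStrictFDerivAt_of_hasFDerivAt_of_continuousAt (.of_forall hf) hf'_cont.continuousAt
  refine isHomeomorph_of_forall_exists_isLiftOn_lineMap hlocal (T2Space.isSeparatedMap f) 0 fun y =>
    exists_isLiftOn_Icc_of_forall_tendsto hlocal (T2Space.isSeparatedMap f) zero_le_one
      (by fun_prop) (by simp) fun b hb γ hγ => ?_
  have hγ_deriv : ∀ t ∈ Ico 0 b, HasDerivWithinAt γ ((f' (γ t)).symm (y - f 0)) (Ico 0 b) t :=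
    fun t ht => hγ.hasDerivWithinAt ht (hf (γ t)) (g' := (f' (γ t)).symm)
      (f' (γ t)).symm_apply_apply AffineMap.hasDerivWithinAt_lineMap
  refine exists_tendsto_nhdsLT_of_norm_deriv_le (K := c * ‖y - f 0‖) (ε := c * ‖y - f 0‖) hb.1
    hγ_deriv fun t _ => ?_
  calc ‖(f' (γ t)).symm (y - f 0)‖
      ≤ c * (‖γ t‖ + 1) * ‖y - f 0‖ :=
        ((f' (γ t)).symm : Y →L[ℝ] X).le_of_opNorm_le (hgrowth (γ t)) (y - f 0)
    _ = c * ‖y - f 0‖ * ‖γ t‖ + c * ‖y - f 0‖ := by ring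

theorem global_inverse_linear_growth
    {X Y : Type*} [NormedAddCommGroup X] [NormedSpace ℝ X] [CompleteSpace X]
    [NormedAddCommGroup Y] [NormedSpace ℝ Y] [CompleteSpace Y]
    (f : X → Y) (f' : X → (X →L[ℝ] Y)) (finv : X → (Y →L[ℝ] X))
    (hf' : ∀ x : X, HasFDerivAt f (f' x) x)
    (hinv : ∀ x : X,
      (f' x).comp (finv x) = ContinuousLinearMap.id ℝ Y ∧
      (finv x).comp (f' x) = ContinuousLinearMap.id ℝ X)
    (hlip : LocallyLipschitz finv)
    (c : ℝ) (hgrowth : ∀ x : X, ‖finv x‖ ≤ c * (‖x‖ + 1)) :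
    Function.Surjective f ∧
      ∃ ψ : Y → X, Continuous ψ ∧ ∀ y : Y, f (ψ y) = y := by
  have h : IsHomeomorph f := global_inverse_linear_growth_general
    (f' := fun x => .equivOfInverse' (f' x) (finv x) (hinv x).1 (hinv x).2) hf' hlip.continuous
    hgrowth
  exact ⟨h.surjective, _, (h.homeomorph f).symm.continuous, (h.homeomorph f).apply_symm_apply⟩
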